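/- Let n and k be positive integers with 6 ≤ k ≤ n − 1, and write n = ℓ·(k+1) + r with 0 ≤ r ≤ k. If r ≥ 1, k + r is even, k is odd, and ℓ ≥ 2, then s(n,k) = (nk + 1)/2. -/

import Mathlib

open Finset

variable {V : Type*}

/-- A fractional perfect matching of a finite simple graph. -/
def SimpleGraph.IsFracPerfectMatching [Fintype V] [DecidableEq V]
    (G : SimpleGraph V) (f : Sym2 V → ℝ) : Prop :=
  (∀ e, 0 ≤ f e ∧ f e ≤ 1) ∧ (∀ e, e ∉ G.edgeSet → f e = 0) ∧
    ∀ v : V, ∑ e ∈ Finset.univ.filter (fun e : Sym2 V => v ∈ e), f e = 1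

/-- `G` has a fractional perfect matching. -/
def SimpleGraph.HasFPM [Fintype V] [DecidableEq V] (G : SimpleGraph V) : Prop :=
  ∃ f, G.IsFracPerfectMatching f

/-- The fractional matching preclusion number of `G`. -/
noncomputable def SimpleGraph.fmp [Fintype V] [DecidableEq V] (G : SimpleGraph V) : ℕ :=
  sInf {k | ∃ F : Finset (Sym2 V), ↑F ⊆ G.edgeSet ∧ F.card = k ∧
    ¬ (G.deleteEdges ↑F).HasFPM}

/-- The minimum degree of `G`. -/
noncomputable def SimpleGraph.minDeg [Fintype V] (G : SimpleGraph V) : ℕ :=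
  sInf {d | ∃ v : V, (G.neighborSet v).ncard = d}

/-- A graph contains a Hamiltonian cycle. -/
def SimpleGraph.IsHamil {W : Type*} [DecidableEq W] (G : SimpleGraph W) : Prop :=
  ∃ (a : W) (p : G.Walk a a), p.IsHamiltonianCycle

/-- The induced subgraph on `A` is a `K₂`. -/
def SimpleGraph.IsK2Part [DecidableEq V] (G : SimpleGraph V) (A : Finset V) : Prop :=
  ∃ u v : V, A = {u, v} ∧ G.Adj u v

open Classical in
/-- A permutation moving every vertex to a neighbour gives a fractional perfect matching. -/
theorem hasFPM_of_inj [Fintype V] [DecidableEq V] (G : SimpleGraph V) (p : V → V)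
    (hp : Function.Injective p) (h : ∀ v, G.Adj v (p v)) : G.HasFPM := by
  have hsum : ∀ v : V, ∑ e ∈ Finset.univ.filter (fun e : Sym2 V => v ∈ e),
      (1/2 : ℝ) * ((Finset.univ.filter (fun u : V => s(u, p u) = e)).card : ℝ) = 1 := by
    intro v
    rw [← Finset.mul_sum, ← Nat.cast_sum]
    have h1 : ∑ e ∈ Finset.univ.filter (fun e : Sym2 V => v ∈ e),
        (Finset.univ.filter (fun u : V => s(u, p u) = e)).card
        = (Finset.univ.filter (fun u : V => v ∈ s(u, p u))).card := by
      rw [Finset.card_eq_sum_card_fiberwise (f := fun u => s(u, p u))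
        (t := Finset.univ.filter (fun e : Sym2 V => v ∈ e))]
      · apply Finset.sum_congr rfl
        intro e he
        congr 1
        ext u
        simp only [Finset.mem_filter, Finset.mem_univ, true_and] at he ⊢
        constructor
        · intro hh; exact ⟨hh ▸ he, hh⟩
        · exact fun hh => hh.2
      · intro u hu
        simpa using hu
    obtain ⟨w, hw⟩ := (Finite.injective_iff_surjective.mp hp) v
    have h2 : (Finset.univ.filter (fun u : V => v ∈ s(u, p u))) = {v, w} := by
      ext u
      simp only [Finset.mem_filter, Finset.mem_univ, true_and, Sym2.mem_iff,
        Finset.mem_insert, Finset.mem_singleton]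
      constructor
      · rintro (hh | hh)
        · exact Or.inl hh.symm
        · right; apply hp; rw [hw, hh]
      · rintro (hh | hh)
        · exact Or.inl hh.symm
        · right; rw [hh, hw]
    have hvw : v ≠ w := by
      rintro rfl
      exact (h v).ne hw.symm
    rw [h1, h2, Finset.card_pair hvw]
    norm_num
  refine ⟨fun e => (1/2 : ℝ) * ((Finset.univ.filter (fun u : V => s(u, p u) = e)).card : ℝ),
    ?_, ?_, hsum⟩
  · intro e
    refine ⟨by positivity, ?_⟩
    induction e with
    | h x y =>
      refine le_trans ?_ (hsum x).le
      apply Finset.single_le_sum (f := fun e : Sym2 V =>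
        (1/2 : ℝ) * ((Finset.univ.filter (fun u : V => s(u, p u) = e)).card : ℝ))
      · intro i _; positivity
      · simp
  · intro e he
    have : Finset.univ.filter (fun u : V => s(u, p u) = e) = ∅ := by
      rw [Finset.filter_eq_empty_iff]
      intro u _ hu
      exact he (hu ▸ h u)
    simp [this]

open Classical in
/-- Deleting the edges at a vertex precludes fractional perfect matchings. -/
theorem mem_fmp_set [Fintype V] [DecidableEq V] (G : SimpleGraph V) (v : V) :
    ∃ F : Finset (Sym2 V), ↑F ⊆ G.edgeSet ∧ F.card = G.degree v ∧
      ¬ (G.deleteEdges ↑F).HasFPM := by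
  refine ⟨G.incidenceFinset v, ?_, G.card_incidenceFinset_eq_degree v, ?_⟩
  · intro e he
    simp only [Finset.mem_coe, SimpleGraph.mem_incidenceFinset] at he
    exact G.incidenceSet_subset v he
  · rintro ⟨f, -, h0, h1⟩
    have := h1 v
    rw [Finset.sum_eq_zero] at this
    · exact zero_ne_one this
    · intro e he
      apply h0
      simp only [Finset.mem_filter, Finset.mem_univ, true_and] at he
      rw [SimpleGraph.edgeSet_deleteEdges]
      rintro ⟨h2, h3⟩
      apply h3
      simp only [Finset.mem_coe, SimpleGraph.mem_incidenceFinset]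
      exact ⟨h2, he⟩

open Classical in
theorem fmp_le_degree [Fintype V] [DecidableEq V] (G : SimpleGraph V) (v : V) :
    G.fmp ≤ G.degree v := Nat.sInf_le (mem_fmp_set G v)

open Classical in
/-- Failure of Hall's condition yields an independent set with few neighbours. -/
theorem exists_indep [Fintype V] [DecidableEq V] (H : SimpleGraph V) (hH : ¬ H.HasFPM) :
    ∃ A B : Finset V, Disjoint A B ∧ A.card = B.card + 1 ∧
      ∀ u ∈ A, ∀ v, H.Adj u v → v ∈ B := by
  have h1 : ¬ ∀ s : Finset V, s.card ≤ (s.biUnion fun v => H.neighborFinset v).card := by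
    rw [Finset.all_card_le_biUnion_card_iff_exists_injective]
    rintro ⟨p, hp, hp2⟩
    exact hH (hasFPM_of_inj H p hp (fun v => by simpa using hp2 v))
  push Not at h1
  obtain ⟨S, hS⟩ := h1
  set N := S.biUnion fun v => H.neighborFinset v with hN
  have hmem : ∀ u ∈ S, ∀ v, H.Adj u v → v ∈ N := by
    intro u hu v huv
    rw [hN, Finset.mem_biUnion]
    exact ⟨u, hu, by simpa using huv⟩
  have e1 := Finset.card_sdiff_add_card_inter S N
  have e2 := Finset.card_sdiff_add_card_inter N S
  rw [Finset.inter_comm N S] at e2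
  obtain ⟨A, hA, hA2⟩ := Finset.exists_subset_card_eq (s := S \ N) (n := (N \ S).card + 1)
    (by omega)
  refine ⟨A, N \ S, ?_, hA2, ?_⟩
  · rw [Finset.disjoint_left]
    intro x hx hx2
    have := hA hx
    simp only [Finset.mem_sdiff] at this hx2
    exact hx2.2 this.1
  · intro u hu v huv
    have := hA hu
    simp only [Finset.mem_sdiff] at this ⊢
    refine ⟨hmem u this.1 v huv, fun hv => this.2 (hmem v hv u huv.symm)⟩

/-- Counting bad edges in one triangle. -/
theorem triangle_count {A1 A2 A3 B1 B2 B3 P1 P2 P3 : Prop}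
    [Decidable A1] [Decidable A2] [Decidable A3] [Decidable B1] [Decidable B2] [Decidable B3]
    [Decidable P1] [Decidable P2] [Decidable P3]
    (a1 : A1 → ¬ B2 → P1) (a1' : A2 → ¬ B1 → P1)
    (a2 : A2 → ¬ B3 → P2) (a2' : A3 → ¬ B2 → P2)
    (a3 : A1 → ¬ B3 → P3) (a3' : A3 → ¬ B1 → P3)
    (j1 : A1 → ¬ B1) (j2 : A2 → ¬ B2) (j3 : A3 → ¬ B3) :
    ((if A1 then (1 : ℤ) else 0) + (if A2 then 1 else 0) + (if A3 then 1 else 0)) +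
      ((if A1 then 1 else 0) + (if B1 then 1 else 0)) ≤
    2 * ((if P1 then 1 else 0) + (if P2 then 1 else 0) + (if P3 then 1 else 0)) +
      ((if B1 then 1 else 0) + (if B2 then 1 else 0) + (if B3 then 1 else 0)) := by
  by_cases A1 <;> by_cases A2 <;> by_cases A3 <;> by_cases B1 <;> by_cases B2 <;>
    by_cases B3 <;> simp_all <;> split_ifs <;> simp

open Classical in
/-- Robustness: minimum degree `k` together with a system of edge-disjoint triangles. -/
theorem core [Fintype V] [DecidableEq V] (G : SimpleGraph V) (k : ℕ) (hk : 6 ≤ k)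
    (hdeg : ∀ v, k ≤ G.degree v) (p q : Equiv.Perm V)
    (h1 : ∀ v, G.Adj v (p v)) (h2 : ∀ v, G.Adj (p v) (q v)) (h3 : ∀ v, G.Adj v (q v))
    (i1 : ∀ u v, s(u, p u) = s(v, p v) → u = v)
    (i2 : ∀ u v, s(p u, q u) = s(p v, q v) → u = v)
    (i3 : ∀ u v, s(u, q u) = s(v, q v) → u = v)
    (d12 : ∀ u v, s(u, p u) ≠ s(p v, q v))
    (d13 : ∀ u v, s(u, p u) ≠ s(v, q v))
    (d23 : ∀ u v, s(p u, q u) ≠ s(v, q v))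
    (F : Finset (Sym2 V)) (hF : ¬ (G.deleteEdges ↑F).HasFPM) : k ≤ F.card := by
  obtain ⟨A, B, hdisj, hcard, hAB⟩ := exists_indep _ hF
  have hbad : ∀ u v, G.Adj u v → u ∈ A → v ∉ B → s(u, v) ∈ F := by
    intro u v huv hu hv
    by_contra hcon
    apply hv
    apply hAB u hu v
    rw [SimpleGraph.deleteEdges_adj]
    exact ⟨huv, fun h => hcon (Finset.mem_coe.mp h)⟩
  have hdegB : ∀ u, k - B.card ≤ (G.neighborFinset u \ B).card := by
    intro u
    have := Finset.le_card_sdiff B (G.neighborFinset u)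
    rw [G.card_neighborFinset_eq_degree] at this
    have := hdeg u
    omega
  have himg : ∀ (u : V) (T : Finset V), (T.image (fun v => s(u, v))).card = T.card := by
    intro u T
    apply Finset.card_image_of_injective
    intro x y hxy
    exact Sym2.congr_right.mp hxy
  rcases Nat.lt_or_ge B.card 2 with hb | hb
  · obtain ⟨u, hu⟩ : A.Nonempty := by
      rw [← Finset.card_pos]; omega
    have hsub : ((G.neighborFinset u \ B).image (fun v => s(u, v))) ⊆ F := by
      intro e he
      simp only [Finset.mem_image, Finset.mem_sdiff, SimpleGraph.mem_neighborFinset] at he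
      obtain ⟨v, ⟨hv1, hv2⟩, rfl⟩ := he
      exact hbad u v hv1 hu hv2
    rcases Nat.lt_or_ge B.card 1 with hb1 | hb1
    · have := Finset.card_le_card hsub
      rw [himg] at this
      have := hdegB u
      omega
    · obtain ⟨w, hw, hwu⟩ := Finset.exists_mem_ne (s := A) (by omega) u
      have hsub2 : (((G.neighborFinset w \ B).erase u).image (fun v => s(w, v))) ⊆ F := by
        intro e he
        simp only [Finset.mem_image, Finset.mem_erase, Finset.mem_sdiff,
          SimpleGraph.mem_neighborFinset] at he
        obtain ⟨v, ⟨-, hv1, hv2⟩, rfl⟩ := he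
        exact hbad w v hv1 hw hv2
      have hd : Disjoint ((G.neighborFinset u \ B).image (fun v => s(u, v)))
          (((G.neighborFinset w \ B).erase u).image (fun v => s(w, v))) := by
        rw [Finset.disjoint_left]
        intro e he he2
        simp only [Finset.mem_image, Finset.mem_erase] at he he2
        obtain ⟨x, -, rfl⟩ := he
        obtain ⟨y, ⟨hy, -⟩, hxy⟩ := he2
        rw [Sym2.eq_iff] at hxy
        rcases hxy with ⟨a, b⟩ | ⟨a, b⟩
        · exact hwu a
        · exact hy b
      have := Finset.card_le_card (Finset.union_subset hsub hsub2)
      rw [Finset.card_union_of_disjoint hd, himg, himg] at this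
      have := hdegB u
      have := hdegB w
      have := Finset.pred_card_le_card_erase (s := G.neighborFinset w \ B) (a := u)
      omega
  rcases Nat.lt_or_ge B.card (k - 2) with hb2 | hb2
  · -- degree counting
    obtain ⟨H, hH⟩ : ∃ H : SimpleGraph V, H = SimpleGraph.fromEdgeSet (F : Set (Sym2 V)) :=
      ⟨_, rfl⟩
    have hHd : ∀ u ∈ A, k - B.card ≤ H.degree u := by
      intro u hu
      refine (hdegB u).trans ?_
      rw [← H.card_neighborFinset_eq_degree]
      apply Finset.card_le_card
      intro v hv
      simp only [Finset.mem_sdiff, SimpleGraph.mem_neighborFinset] at hv ⊢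
      rw [hH, SimpleGraph.fromEdgeSet_adj]
      exact ⟨hbad u v hv.1 hu hv.2, hv.1.ne⟩
    have hs : ∑ v, H.degree v ≤ 2 * F.card := by
      rw [H.sum_degrees_eq_twice_card_edges]
      apply Nat.mul_le_mul_left 2
      apply Finset.card_le_card
      intro e he
      have he2 : e ∈ H.edgeSet := SimpleGraph.mem_edgeFinset.mp he
      rw [hH, SimpleGraph.edgeSet_fromEdgeSet] at he2
      exact he2.1
    have hs3 : A.card * (k - B.card) ≤ ∑ v, H.degree v := by
      calc A.card * (k - B.card) = ∑ u ∈ A, (k - B.card) := by simp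
        _ ≤ ∑ u ∈ A, H.degree u := Finset.sum_le_sum hHd
        _ ≤ _ := Finset.sum_le_sum_of_subset (Finset.subset_univ A)
    rw [hcard] at hs3
    obtain ⟨c, hc⟩ : ∃ c, k = B.card + 3 + c := ⟨k - (B.card + 3), by omega⟩
    obtain ⟨d, hd⟩ : ∃ d, B.card = d + 2 := ⟨B.card - 2, by omega⟩
    have e : k - B.card = c + 3 := by omega
    rw [e, hd] at hs3
    have : (d + 2 + 1) * (c + 3) = 3 * d + 3 * c + 9 + d * c := by ring
    have : 0 ≤ d * c := Nat.zero_le _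
    omega
  · -- triangle counting
    let X1 := Finset.univ.filter (fun v => s(v, p v) ∈ F)
    let X2 := Finset.univ.filter (fun v => s(p v, q v) ∈ F)
    let X3 := Finset.univ.filter (fun v => s(v, q v) ∈ F)
    have hX : X1.card + X2.card + X3.card ≤ F.card := by
      have c1 : (X1.image (fun v => s(v, p v))).card = X1.card :=
        Finset.card_image_of_injective _ (fun u v h => i1 u v h)
      have c2 : (X2.image (fun v => s(p v, q v))).card = X2.card :=
        Finset.card_image_of_injective _ (fun u v h => i2 u v h)
      have c3 : (X3.image (fun v => s(v, q v))).card = X3.card :=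
        Finset.card_image_of_injective _ (fun u v h => i3 u v h)
      rw [← c1, ← c2, ← c3, ← Finset.card_union_of_disjoint, ← Finset.card_union_of_disjoint]
      · apply Finset.card_le_card
        intro e he
        simp only [X1, X2, X3, Finset.mem_union, Finset.mem_image, Finset.mem_filter,
          Finset.mem_univ, true_and] at he
        rcases he with (⟨v, hv, rfl⟩ | ⟨v, hv, rfl⟩) | ⟨v, hv, rfl⟩ <;> exact hv
      · rw [Finset.disjoint_left]
        intro e he he2
        simp only [Finset.mem_union, Finset.mem_image] at he he2
        obtain ⟨y, -, hy⟩ := he2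
        rcases he with ⟨x, -, hx⟩ | ⟨x, -, hx⟩
        · exact d13 x y (hx.trans hy.symm)
        · exact d23 x y (hx.trans hy.symm)
      · rw [Finset.disjoint_left]
        intro e he he2
        simp only [Finset.mem_image] at he he2
        obtain ⟨y, -, hy⟩ := he2
        obtain ⟨x, -, hx⟩ := he
        exact d12 x y (hx.trans hy.symm)
    let α : V → ℤ := fun v => if v ∈ A then 1 else 0
    let β : V → ℤ := fun v => if v ∈ B then 1 else 0
    let x1 : V → ℤ := fun v => if s(v, p v) ∈ F then 1 else 0
    let x2 : V → ℤ := fun v => if s(p v, q v) ∈ F then 1 else 0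
    let x3 : V → ℤ := fun v => if s(v, q v) ∈ F then 1 else 0
    have key : ∀ v, (α v + α (p v) + α (q v)) + (α v + β v) ≤
        2 * (x1 v + x2 v + x3 v) + (β v + β (p v) + β (q v)) := by
      intro v
      have a1 := hbad _ _ (h1 v)
      have a1' := hbad _ _ (h1 v).symm
      have a2 := hbad _ _ (h2 v)
      have a2' := hbad _ _ (h2 v).symm
      have a3 := hbad _ _ (h3 v)
      have a3' := hbad _ _ (h3 v).symm
      rw [Sym2.eq_swap] at a1' a2' a3'
      have j1 : v ∈ A → v ∉ B := fun h => Finset.disjoint_left.mp hdisj h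
      have j2 : p v ∈ A → p v ∉ B := fun h => Finset.disjoint_left.mp hdisj h
      have j3 : q v ∈ A → q v ∉ B := fun h => Finset.disjoint_left.mp hdisj h
      simp only [α, β, x1, x2, x3]
      exact triangle_count a1 a1' a2 a2' a3 a3' j1 j2 j3
    have hsum := Finset.sum_le_sum (s := Finset.univ) (fun v _ => key v)
    simp only [Finset.sum_add_distrib, ← Finset.mul_sum] at hsum
    rw [Equiv.sum_comp p α, Equiv.sum_comp q α, Equiv.sum_comp p β, Equiv.sum_comp q β] at hsum
    have sα : ∑ v, α v = A.card := by simp [α]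
    have sβ : ∑ v, β v = B.card := by simp [β]
    have s1 : ∑ v, x1 v = X1.card := by simp [x1, X1]
    have s2 : ∑ v, x2 v = X2.card := by simp [x2, X2]
    have s3 : ∑ v, x3 v = X3.card := by simp [x3, X3]
    rw [sα, sβ, s1, s2, s3] at hsum
    omega

/-- The Harary graph on an odd number `n = 2m+1` of vertices. -/
def harary (n h m : ℕ) : SimpleGraph (Fin n) :=
  SimpleGraph.fromRel (fun u v => u.val < v.val ∧
    (v.val - u.val ≤ h ∨ n - h ≤ v.val - u.val ∨ v.val - u.val = m))

theorem harary_adj (n h m : ℕ) (u v : Fin n) : (harary n h m).Adj u v ↔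
    (u.val < v.val ∧ (v.val - u.val ≤ h ∨ n - h ≤ v.val - u.val ∨ v.val - u.val = m)) ∨
    (v.val < u.val ∧ (u.val - v.val ≤ h ∨ n - h ≤ u.val - v.val ∨ u.val - v.val = m)) := by
  rw [harary, SimpleGraph.fromRel_adj]
  constructor
  · exact fun h => h.2
  · intro h
    refine ⟨?_, h⟩
    rintro rfl
    omega

theorem fin_add_val (n d : ℕ) [NeZero n] (hd : d < n) (u : Fin n) :
    ((u + Fin.ofNat n d : Fin n).val = u.val + d ∧ u.val + d < n) ∨
    ((u + Fin.ofNat n d : Fin n).val + n = u.val + d ∧ n ≤ u.val + d) := by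
  have hu := u.isLt
  rw [Fin.val_add]
  simp only [Fin.val_ofNat, Nat.mod_eq_of_lt hd]
  rcases Nat.lt_or_ge (u.val + d) n with h | h
  · left; rw [Nat.mod_eq_of_lt h]; exact ⟨rfl, h⟩
  · right
    rw [Nat.mod_eq_sub_mod h, Nat.mod_eq_of_lt (by omega)]
    omega

open Classical in
theorem harary_degree (n h m : ℕ) (hn : n = 2 * m + 1) (hm : h < m) (v : Fin n) :
    2 * h + 1 ≤ (harary n h m).degree v := by
  have : NeZero n := ⟨by omega⟩
  let S : Finset ℕ := insert (if v.val ≤ m then m else m + 1) (Finset.Icc 1 h ∪ Finset.Ico (n - h) n)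
  have hS : S.card = 2 * h + 1 := by
    rw [Finset.card_insert_of_notMem, Finset.card_union_of_disjoint]
    · simp; omega
    · rw [Finset.disjoint_left]
      intro x hx hy
      simp only [Finset.mem_Icc, Finset.mem_Ico] at hx hy
      omega
    · simp only [Finset.mem_union, Finset.mem_Icc, Finset.mem_Ico]
      split_ifs <;> omega
  have hSlt : ∀ d ∈ S, d < n := by
    intro d hd
    simp only [S, Finset.mem_insert, Finset.mem_union, Finset.mem_Icc, Finset.mem_Ico] at hd
    split_ifs at hd <;> omega
  rw [← hS, ← SimpleGraph.card_neighborFinset_eq_degree]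
  apply Finset.card_le_card_of_injOn (fun d => v + Fin.ofNat n d)
  · intro d hd
    have hlt := hSlt d hd
    simp only [S, Finset.mem_coe, Finset.mem_insert, Finset.mem_union, Finset.mem_Icc,
      Finset.mem_Ico] at hd
    simp only [Finset.mem_coe, SimpleGraph.mem_neighborFinset]
    rw [harary_adj]
    have := fin_add_val n d hlt v
    have := v.isLt
    split_ifs at hd <;> omega
  · intro d hd e he hde
    have a1 := fin_add_val n d (hSlt d hd) v
    have a2 := fin_add_val n e (hSlt e he) v
    have := congrArg Fin.val hde
    simp only at this
    have := hSlt d hd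
    have := hSlt e he
    omega

open Classical in
theorem harary_edges (n h m : ℕ) (hn : n = 2 * m + 1) (hm : h < m) :
    (harary n h m).edgeFinset.card ≤ n * h + (m + 1) := by
  have : NeZero n := ⟨by omega⟩
  have hsub : (harary n h m).edgeFinset ⊆
      ((Finset.univ : Finset (Fin n)) ×ˢ Finset.Icc 1 h).image
        (fun x => s(x.1, x.1 + Fin.ofNat n x.2)) ∪
      (Finset.range (m + 1)).image (fun i => s(Fin.ofNat n i, Fin.ofNat n i + Fin.ofNat n m)) := by
    intro e he
    rw [SimpleGraph.mem_edgeFinset] at he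
    have main : ∀ u v : Fin n, (u.val < v.val ∧
        (v.val - u.val ≤ h ∨ n - h ≤ v.val - u.val ∨ v.val - u.val = m)) → s(u, v) ∈
      ((Finset.univ : Finset (Fin n)) ×ˢ Finset.Icc 1 h).image
        (fun x => s(x.1, x.1 + Fin.ofNat n x.2)) ∪
      (Finset.range (m + 1)).image
        (fun i => s(Fin.ofNat n i, Fin.ofNat n i + Fin.ofNat n m)) := by
      rintro u v ⟨huv, hc⟩
      have hu := u.isLt
      have hv := v.isLt
      rw [Finset.mem_union, Finset.mem_image, Finset.mem_image]
      rcases hc with hc | hc | hc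
      · left
        refine ⟨(u, v.val - u.val), by simp; omega, ?_⟩
        have : u + Fin.ofNat n (v.val - u.val) = v := by
          apply Fin.ext
          have := fin_add_val n (v.val - u.val) (by omega) u
          omega
        simp only [this]
      · left
        refine ⟨(v, n + u.val - v.val), by simp; omega, ?_⟩
        have : v + Fin.ofNat n (n + u.val - v.val) = u := by
          apply Fin.ext
          have := fin_add_val n (n + u.val - v.val) (by omega) v
          omega
        simp only [this]
        exact Sym2.eq_swap
      · right
        refine ⟨u.val, by simp; omega, ?_⟩
        have e1 : Fin.ofNat n u.val = u := by
          apply Fin.ext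
          simp [Nat.mod_eq_of_lt hu]
        have : u + Fin.ofNat n m = v := by
          apply Fin.ext
          have := fin_add_val n m (by omega) u
          omega
        rw [e1, this]
    induction e with
    | h u v =>
      rw [SimpleGraph.mem_edgeSet, harary_adj] at he
      rcases he with he | he
      · exact main u v he
      · rw [Sym2.eq_swap]; exact main v u he
  refine (Finset.card_le_card hsub).trans ((Finset.card_union_le _ _).trans ?_)
  apply Nat.add_le_add
  · refine Finset.card_image_le.trans ?_
    simp
  · refine Finset.card_image_le.trans ?_
    simp

theorem harary_robust (n h m : ℕ) (hn : n = 2 * m + 1) (hm : h < m) (hh : 3 ≤ h)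
    (F : Finset (Sym2 (Fin n)))
    (hF : ¬ ((harary n h m).deleteEdges ↑F).HasFPM) : 2 * h + 1 ≤ F.card := by
  classical
  have : NeZero n := ⟨by omega⟩
  have f1 := fin_add_val n 1 (by omega)
  have f3 := fin_add_val n 3 (by omega)
  refine core (harary n h m) (2 * h + 1) (by omega)
    (fun v => by convert harary_degree n h m hn hm v)
    (Equiv.addRight (Fin.ofNat n 1)) (Equiv.addRight (Fin.ofNat n 3))
    ?_ ?_ ?_ ?_ ?_ ?_ ?_ ?_ ?_ F hF
  all_goals simp only [Equiv.coe_addRight, harary_adj, ne_eq, Sym2.eq_iff, Fin.ext_iff]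
  all_goals intro u
  all_goals have a1 := f1 u
  all_goals have a2 := f3 u
  all_goals have a3 := u.isLt
  on_goal 4 => skip
  iterate 3 omega
  all_goals intro v
  all_goals have b1 := f1 v
  all_goals have b2 := f3 v
  all_goals have b3 := v.isLt
  all_goals omega

theorem s_nk_case2 (n k l r : ℕ) (hn : 1 ≤ n) (hk6 : 6 ≤ k) (hkn : k ≤ n - 1)
    (hdecomp : n = l * (k + 1) + r) (hr : r ≤ k)
    (hcase : 1 ≤ r ∧ Even (k + r) ∧ Odd k ∧ 2 ≤ l) :
    ∃ m : ℕ, 2 * m = n * k + 1 ∧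
      IsLeast {m : ℕ | ∃ G : SimpleGraph (Fin n), G.fmp = k ∧ G.edgeSet.ncard = m} m := by
  classical
  obtain ⟨hr1, hkr, ⟨h, hh⟩, hl⟩ := hcase
  have hnodd : Odd n := by
    have hr' : Odd r := by
      rcases Nat.even_or_odd r with h1 | h1
      · exfalso
        obtain ⟨a, ha⟩ := hkr
        obtain ⟨b, hb⟩ := h1
        omega
      · exact h1
    rw [hdecomp]
    apply Even.add_odd _ hr'
    exact Even.mul_left ⟨h + 1, by omega⟩ l
  obtain ⟨m, hm⟩ := hnodd
  have hnk : 2 * (k + 1) ≤ n := by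
    have := Nat.mul_le_mul_right (k + 1) hl
    omega
  obtain ⟨t, ht⟩ : Odd (n * k) := Odd.mul ⟨m, hm⟩ ⟨h, hh⟩
  -- number of edges of a graph with minimum degree at least k
  have lower : ∀ G : SimpleGraph (Fin n), (∀ v, k ≤ G.degree v) →
      n * k ≤ 2 * G.edgeFinset.card := by
    intro G hG
    rw [← G.sum_degrees_eq_twice_card_edges]
    calc n * k = ∑ v : Fin n, k := by simp
      _ ≤ _ := Finset.sum_le_sum (fun v _ => hG v)
  have hnc : ∀ G : SimpleGraph (Fin n), G.edgeSet.ncard = G.edgeFinset.card := by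
    intro G
    rw [← SimpleGraph.coe_edgeFinset, Set.ncard_coe_finset]
  refine ⟨t + 1, by omega, ?_, ?_⟩
  · refine ⟨harary n h m, ?_, ?_⟩
    all_goals
      have hdeg : ∀ v, k ≤ (harary n h m).degree v := fun v => by
        have := harary_degree n h m hm (by omega) v
        omega
      have hE := harary_edges n h m hm (by omega)
      have hlow := lower _ hdeg
      have hup : 2 * (n * h + (m + 1)) = n * k + 1 := by
        rw [hh, hm]; ring
    · apply le_antisymm
      · by_contra hcon
        push Not at hcon
        have hall : ∀ v, k + 1 ≤ (harary n h m).degree v := fun v =>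
          le_trans hcon (by convert fmp_le_degree (harary n h m) v)
        have : n * (k + 1) ≤ 2 * (harary n h m).edgeFinset.card := by
          rw [← (harary n h m).sum_degrees_eq_twice_card_edges]
          calc n * (k + 1) = ∑ v : Fin n, (k + 1) := by simp
            _ ≤ _ := Finset.sum_le_sum (fun v _ => hall v)
        rw [Nat.mul_add] at this
        omega
      · apply le_csInf
        · exact ⟨_, mem_fmp_set (harary n h m) ⟨0, by omega⟩⟩
        · rintro b ⟨F, -, rfl, hF⟩
          have := harary_robust n h m hm (by omega) (by omega) F hF
          omega
    · rw [hnc]; omega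
  · rintro b ⟨G, hG, rfl⟩
    have := lower G (fun v => by rw [← hG]; convert fmp_le_degree G v)
    rw [hnc]
    omega
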